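/- arXiv:2506.02385 — 4 statements merged into one kernel-verified Lean document; each statement's English description precedes it below -/
import Mathlib

section
/- Let S_A, A_A, S_B, A_B be finite types, and put α = S_A × A_A, β = S_B × A_B. Let p_A : S_A → A_A → S_A → ℝ and p_B : S_B → A_B → S_B → ℝ be transition kernels (nonnegative, with ∑_{s'} p_A s a s' = 1 and ∑_{s'} p_B s a s' = 1 for all (s,a)), and let π : S_A → S_B → (A_A × A_B) → ℝ be a policy (nonnegative, with ∑_{(a_A,a_B)} π s_A s_B (a_A,a_B) = 1 for all states). Define the induced transition matrix P over α × β by P ((s_A,a_A),(s_B,a_B)) ((s'_A,a'_A),(s'_B,a'_B)) = p_A s_A a_A s'_A · p_B s_B a_B s'_B · π s'_A s'_B (a'_A,a'_B), and let μ be a strictly positive stationary probability vector for P. Then for every local policy π' : S_A → A_A → ℝ (nonnegative with ∑_{a} π' s a = 1 for all s), (1/2) ∑_{((s_A,a_A),(s_B,a_B))} μ((s_A,a_A),(s_B,a_B)) · ∑_{(s'_A,a'_A)} | ∑_{(s'_B,a'_B)} P ((s_A,a_A),(s_B,a_B)) ((s'_A,a'_A),(s'_B,a'_B)) − p_A s_A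 a_A s'_A · π' s'_A a'_A | ≤ (1/2) ∑_{(s'_A,s'_B)} ν(s'_A,s'_B) · ∑_{a'_A} | π_A s'_A s'_B a'_A − π' s'_A a'_A |, where ν(s'_A,s'_B) = ∑_{(a_A,a_B)} μ((s'_A,a_A),(s'_B,a_B)) is the state-marginal of μ and π_A s_A s_B a_A = ∑_{a_B} π s_A s_B (a_A,a_B). -/
open Matrix

/-- The transition matrix over state–action pairs induced by local kernels `pA`, `pB` and
a joint policy `pol`. -/
def inducedP {SA AA SB AB : Type*}
    (pA : SA → AA → SA → ℝ) (pB : SB → AB → SB → ℝ)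
    (pol : SA → SB → AA × AB → ℝ) :
    Matrix ((SA × AA) × (SB × AB)) ((SA × AA) × (SB × AB)) ℝ :=
  Matrix.of fun p q =>
    pA p.1.1 p.1.2 q.1.1 * pB p.2.1 p.2.2 q.2.1 * pol q.1.1 q.2.1 (q.1.2, q.2.2)

/-!
Summing row `p` of the induced matrix over all actions leaves the product kernel `pA ⊗ pB`, so for a
vector `μ` with `μ P ≤ μ` the average of this kernel under `μ` is at most the state marginal of `μ`.
On the other hand, since `pB` sums to one, the deviation of agent `A`'s row marginal from
`pA · pol'` is the average under the same kernel of the deviation of agent `A`'s policy marginal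
from `pol'`. The triangle inequality bounds each row, and averaging over `μ` gives the claim.
-/

/-- The marginal on the first coordinate of a function on a product. It serves both for agent `A`'s
part `π_A` of a joint policy, as `fstMarginal (π sA sB)`, and for agent `A`'s part of a row of a
transition matrix. -/
def fstMarginal {ι κ M : Type*} [Fintype κ] [AddCommMonoid M] (f : ι × κ → M) (i : ι) : M :=
  ∑ k, f (i, k)

/-- The marginal on joint states of a vector `μ` over the state–action pairs of two agents, obtained
by summing out both actions; the paper's `ν`. -/
def stateMarginal {SA AA SB AB M : Type*} [Fintype AA] [Fintype AB] [AddCommMonoid M]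
    (μ : (SA × AA) × (SB × AB) → M) (s : SA × SB) : M :=
  ∑ a : AA × AB, μ ((s.1, a.1), (s.2, a.2))

theorem sum_abs_sum_mul_le {ι κ R : Type*} [Fintype ι] [Fintype κ]
    [Ring R] [LinearOrder R] [IsOrderedRing R] {w : ι → R} (hw : ∀ i, 0 ≤ w i) (f : ι → κ → R) :
    ∑ k, |∑ i, w i * f i k| ≤ ∑ i, w i * ∑ k, |f i k| := by
  calc ∑ k, |∑ i, w i * f i k|
      ≤ ∑ k, ∑ i, |w i * f i k| := Finset.sum_le_sum fun _ _ => Finset.abs_sum_le_sum_abs _ _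
    _ = ∑ i, w i * ∑ k, |f i k| := by
      simp only [abs_mul, abs_of_nonneg (hw _), Finset.mul_sum]
      exact Finset.sum_comm

section StateMarginal

variable {SA AA SB AB : Type*} [Fintype AA] [Fintype AB]

theorem stateMarginal_mono {M : Type*} [AddCommMonoid M] [PartialOrder M] [IsOrderedAddMonoid M] :
    Monotone (stateMarginal : ((SA × AA) × (SB × AB) → M) → SA × SB → M) :=
  fun _ _ h _ => Finset.sum_le_sum fun _ _ => h _

theorem stateMarginal_vecMul {ι R : Type*} [Fintype ι] [NonUnitalNonAssocSemiring R]
    (μ : ι → R) (P : Matrix ι ((SA × AA) × (SB × AB)) R) :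
    stateMarginal (μ ᵥ* P) = μ ᵥ* Matrix.of fun i => stateMarginal (P i) := by
  ext s
  simp only [stateMarginal, vecMul, dotProduct, of_apply, Finset.mul_sum]
  exact Finset.sum_comm

theorem stateMarginal_inducedP (pA : SA → AA → SA → ℝ) (pB : SB → AB → SB → ℝ)
    {pol : SA → SB → AA × AB → ℝ} (hpol1 : ∀ sA sB, ∑ a, pol sA sB a = 1)
    (p : (SA × AA) × (SB × AB)) (s : SA × SB) :
    stateMarginal (inducedP pA pB pol p) s = pA p.1.1 p.1.2 s.1 * pB p.2.1 p.2.2 s.2 := by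
  simp only [stateMarginal, inducedP, of_apply, Prod.mk.eta, ← Finset.mul_sum, hpol1, mul_one]

theorem sum_mul_kernel_le_stateMarginal [Fintype SA] [Fintype SB]
    (pA : SA → AA → SA → ℝ) (pB : SB → AB → SB → ℝ)
    {pol : SA → SB → AA × AB → ℝ} (hpol1 : ∀ sA sB, ∑ a, pol sA sB a = 1)
    {μ : (SA × AA) × (SB × AB) → ℝ} (hμ : μ ᵥ* inducedP pA pB pol ≤ μ) (s : SA × SB) :
    ∑ p, μ p * (pA p.1.1 p.1.2 s.1 * pB p.2.1 p.2.2 s.2) ≤ stateMarginal μ s := by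
  calc ∑ p, μ p * (pA p.1.1 p.1.2 s.1 * pB p.2.1 p.2.2 s.2)
      = stateMarginal (μ ᵥ* inducedP pA pB pol) s := by
        simp only [stateMarginal_vecMul, vecMul, dotProduct, of_apply,
          stateMarginal_inducedP pA pB hpol1]
    _ ≤ stateMarginal μ s := stateMarginal_mono hμ s

end StateMarginal

section RowDeviation

variable {SA AA SB AB : Type*} [Fintype SB] [Fintype AB]

theorem fstMarginal_inducedP (pA : SA → AA → SA → ℝ) (pB : SB → AB → SB → ℝ)
    (pol : SA → SB → AA × AB → ℝ) (p : (SA × AA) × (SB × AB)) (q : SA × AA) :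
    fstMarginal (inducedP pA pB pol p) q =
      pA p.1.1 p.1.2 q.1 * ∑ sB, pB p.2.1 p.2.2 sB * fstMarginal (pol q.1 sB) q.2 := by
  simp only [fstMarginal, inducedP, of_apply, Fintype.sum_prod_type, Finset.mul_sum, mul_assoc]

theorem fstMarginal_inducedP_sub_eq_sum (pA : SA → AA → SA → ℝ) {pB : SB → AB → SB → ℝ}
    (hpB1 : ∀ s a, ∑ s', pB s a s' = 1) (pol : SA → SB → AA × AB → ℝ) (pol' : SA → AA → ℝ)
    (p : (SA × AA) × (SB × AB)) (q : SA × AA) :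
    fstMarginal (inducedP pA pB pol p) q - pA p.1.1 p.1.2 q.1 * pol' q.1 q.2 =
      ∑ sB, pA p.1.1 p.1.2 q.1 * pB p.2.1 p.2.2 sB *
        (fstMarginal (pol q.1 sB) q.2 - pol' q.1 q.2) := by
  simp only [fstMarginal_inducedP, mul_sub, Finset.sum_sub_distrib, mul_assoc, ← Finset.mul_sum,
    ← Finset.sum_mul, hpB1, one_mul]

theorem sum_abs_fstMarginal_inducedP_sub_le [Fintype SA] [Fintype AA]
    {pA : SA → AA → SA → ℝ} (hpA0 : ∀ s a s', 0 ≤ pA s a s')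
    {pB : SB → AB → SB → ℝ} (hpB0 : ∀ s a s', 0 ≤ pB s a s')
    (hpB1 : ∀ s a, ∑ s', pB s a s' = 1)
    (pol : SA → SB → AA × AB → ℝ) (pol' : SA → AA → ℝ) (p : (SA × AA) × (SB × AB)) :
    ∑ q, |fstMarginal (inducedP pA pB pol p) q - pA p.1.1 p.1.2 q.1 * pol' q.1 q.2|
      ≤ ∑ s : SA × SB, pA p.1.1 p.1.2 s.1 * pB p.2.1 p.2.2 s.2 *
          ∑ aA, |fstMarginal (pol s.1 s.2) aA - pol' s.1 aA| := by
  simp only [fstMarginal_inducedP_sub_eq_sum pA hpB1, Fintype.sum_prod_type]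
  exact Finset.sum_le_sum fun _ _ =>
    sum_abs_sum_mul_le (fun _ => mul_nonneg (hpA0 _ _ _) (hpB0 _ _ _)) _

end RowDeviation

theorem stmt15_general {SA AA SB AB : Type*}
    [Fintype SA] [Fintype AA] [Fintype SB] [Fintype AB]
    {pA : SA → AA → SA → ℝ} (hpA0 : ∀ s a s', 0 ≤ pA s a s')
    {pB : SB → AB → SB → ℝ} (hpB0 : ∀ s a s', 0 ≤ pB s a s')
    (hpB1 : ∀ s a, ∑ s', pB s a s' = 1)
    {pol : SA → SB → AA × AB → ℝ} (hpol1 : ∀ sA sB, ∑ a, pol sA sB a = 1)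
    {μ : (SA × AA) × (SB × AB) → ℝ} (hμ0 : ∀ p, 0 ≤ μ p) (hμ : μ ᵥ* inducedP pA pB pol ≤ μ)
    (pol' : SA → AA → ℝ) :
    ∑ p, μ p * ∑ q, |fstMarginal (inducedP pA pB pol p) q - pA p.1.1 p.1.2 q.1 * pol' q.1 q.2|
      ≤ ∑ s : SA × SB, stateMarginal μ s *
          ∑ aA, |fstMarginal (pol s.1 s.2) aA - pol' s.1 aA| := by
  let dev (s : SA × SB) : ℝ := ∑ aA, |fstMarginal (pol s.1 s.2) aA - pol' s.1 aA|
  calc ∑ p, μ p * ∑ q, |fstMarginal (inducedP pA pB pol p) q - pA p.1.1 p.1.2 q.1 * pol' q.1 q.2|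
      ≤ ∑ p, μ p * ∑ s, pA p.1.1 p.1.2 s.1 * pB p.2.1 p.2.2 s.2 * dev s := by
        gcongr with p
        · exact hμ0 p
        · exact sum_abs_fstMarginal_inducedP_sub_le hpA0 hpB0 hpB1 pol pol' p
    _ = ∑ s, (∑ p, μ p * (pA p.1.1 p.1.2 s.1 * pB p.2.1 p.2.2 s.2)) * dev s := by
        simp only [Finset.mul_sum, Finset.sum_mul, mul_assoc]
        exact Finset.sum_comm
    _ ≤ ∑ s, stateMarginal μ s * dev s := by
        gcongr with s
        exact sum_mul_kernel_le_stateMarginal pA pB hpol1 hμ s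

/-- For weakly-coupled two-agent MDPs, the `μ`-weighted per-row agent-`A` total-variation
expression is bounded by the `μ`-weighted distance between the global policy and any
local policy `pol'` of agent `A`. -/
theorem stmt15 {SA AA SB AB : Type*} [Fintype SA] [Fintype AA] [Fintype SB] [Fintype AB]
    (pA : SA → AA → SA → ℝ) (hpA0 : ∀ s a s', 0 ≤ pA s a s')
    (hpA1 : ∀ s a, ∑ s', pA s a s' = 1)
    (pB : SB → AB → SB → ℝ) (hpB0 : ∀ s a s', 0 ≤ pB s a s')
    (hpB1 : ∀ s a, ∑ s', pB s a s' = 1)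
    (pol : SA → SB → AA × AB → ℝ) (hpol0 : ∀ sA sB a, 0 ≤ pol sA sB a)
    (hpol1 : ∀ sA sB, ∑ a, pol sA sB a = 1)
    (μ : (SA × AA) × (SB × AB) → ℝ) (hμpos : ∀ p, 0 < μ p) (hμsum : ∑ p, μ p = 1)
    (hstat : ∀ q, ∑ p, μ p * inducedP pA pB pol p q = μ q)
    (pol' : SA → AA → ℝ) (hpol'0 : ∀ s a, 0 ≤ pol' s a)
    (hpol'1 : ∀ s, ∑ a, pol' s a = 1) :
    (1 / 2 : ℝ) * ∑ p, μ p * ∑ q1 : SA × AA,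
        |(∑ q2 : SB × AB, inducedP pA pB pol p (q1, q2))
          - pA p.1.1 p.1.2 q1.1 * pol' q1.1 q1.2|
      ≤ (1 / 2 : ℝ) * ∑ s' : SA × SB,
          (∑ a : AA × AB, μ ((s'.1, a.1), (s'.2, a.2))) *
            ∑ aA, |(∑ aB, pol s'.1 s'.2 (aA, aB)) - pol' s'.1 aA| :=
  mul_le_mul_of_nonneg_left
    (stmt15_general hpA0 hpB0 hpB1 hpol1 (fun p => (hμpos p).le) (fun q => (hstat q).le) pol')
    one_half_pos.le
end

section
/- Let E₀₀ = [[1,0],[1,0]], E₁₀ = [[0,1],[1,0]], E₁₁ = [[0,1],[0,1]] (each a 2 × 2 row-stochastic matrix), and let P be the 4 × 4 matrix, indexed by (Fin 2 × Fin 2) in lexicographic order, with rows (1/2, 0, 0, 1/2), (1/2, 0, 0, 1/2), (1/2, 0, 0, 1/2), (0, 1/2, 1/2, 0). Then: (i) P = (1/2) E₀₀ ⊗ E₀₀ + (1/2) E₁₀ ⊗ E₁₁ + (1/2) E₁₁ ⊗ E₁₀ − (1/2) E₁₀ ⊗ E₁₀, so P is a transition matrix that is separable (a linear combination of Kronecker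 products of 2 × 2 row-stochastic matrices with coefficients summing to 1); but (ii) there do NOT exist a finite index set K, nonnegative reals x_j with ∑_{j∈K} x_j = 1, and 2 × 2 row-stochastic matrices A_j, B_j, such that P = ∑_{j∈K} x_j (A_j ⊗ B_j). -/
open Matrix

/-- A row-stochastic (transition) matrix: nonnegative entries, each row sums to 1. -/
def IsTransition {ι : Type*} [Fintype ι] (P : Matrix ι ι ℝ) : Prop :=
  (∀ i j, 0 ≤ P i j) ∧ ∀ i, ∑ j, P i j = 1

/-- Kronecker product of two square matrices. -/
def kron {α β : Type*} (A : Matrix α α ℝ) (B : Matrix β β ℝ) :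
    Matrix (α × β) (α × β) ℝ :=
  Matrix.of fun p q => A p.1 q.1 * B p.2 q.2

def E00 : Matrix (Fin 2) (Fin 2) ℝ := !![1, 0; 1, 0]
def E10 : Matrix (Fin 2) (Fin 2) ℝ := !![0, 1; 1, 0]
def E11 : Matrix (Fin 2) (Fin 2) ℝ := !![0, 1; 0, 1]

/-- The 4 × 4 matrix (indexed by `Fin 2 × Fin 2` lexicographically) with rows
`(1/2,0,0,1/2)`, `(1/2,0,0,1/2)`, `(1/2,0,0,1/2)`, `(0,1/2,1/2,0)`. -/
noncomputable def Pneg : Matrix (Fin 2 × Fin 2) (Fin 2 × Fin 2) ℝ :=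
  Matrix.of fun p q =>
    if p = (1, 1) then (if q.1 = q.2 then 0 else 1 / 2)
    else (if q.1 = q.2 then 1 / 2 else 0)

/-!
Regard `P (i, j) (k, l)` as the probability that two parties given the inputs `i` and `j` answer `k`
and `l`. The answers prescribed by `Pneg` are those of a Popescu–Rohrlich box: they agree on every
input pair except `(1, 1)`, where they differ. In a convex combination of nonnegative matrices, any
term with positive weight vanishes wherever the sum does, so one of the products `A ⊗ B` would have
to obey the same rule. But if the independent answers to `i` and `j` always agree then row `i` of
`A` equals row `j` of `B`, whence `A 1 = B 0 = A 0 = B 1`; as the answers to `(1, 1)` differ, the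
squares of the entries of `A 1` vanish, although these entries sum to `1`.
-/

open scoped Kronecker

section Outcomes

variable {m n ι R : Type*}

/-- For a bipartite conditional distribution `P`, whose entry at `(i, j) (k, l)` is the probability
of the outcomes `k` and `l` given the inputs `i` and `j`: on the inputs `i`, `j` the two outcomes
are almost surely equal. -/
def OutcomesAgree [Zero R] (P : Matrix (m × n) (ι × ι) R) (i : m) (j : n) : Prop :=
  ∀ k l, k ≠ l → P (i, j) (k, l) = 0

/-- For a bipartite conditional distribution `P` as in `OutcomesAgree`: on the inputs `i`, `j` the
two outcomes are almost surely different. -/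
def OutcomesDiffer [Zero R] (P : Matrix (m × n) (ι × ι) R) (i : m) (j : n) : Prop :=
  ∀ k, P (i, j) (k, k) = 0

variable [Fintype ι]

lemma OutcomesAgree.row_eq_row [NonAssocSemiring R] {A : Matrix m ι R} {B : Matrix n ι R}
    {i : m} {j : n} (h : OutcomesAgree (A ⊗ₖ B) i j) (hA : ∑ k, A i k = 1)
    (hB : ∑ l, B j l = 1) : A i = B j := by
  have hAB : ∀ k l, k ≠ l → A i k * B j l = 0 := h
  ext k
  calc
    A i k = ∑ l, A i k * B j l := by rw [← Finset.mul_sum, hB, mul_one]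
    _ = A i k * B j k := Fintype.sum_eq_single k fun l hl => hAB k l hl.symm
    _ = ∑ l, A i l * B j k := (Fintype.sum_eq_single k fun l hl => hAB l k hl).symm
    _ = B j k := by rw [← Finset.sum_mul, hA, one_mul]

lemma not_outcomesDiffer_kronecker [NonAssocSemiring R] [NoZeroDivisors R] [Nontrivial R]
    {A : Matrix m ι R} {B : Matrix n ι R} (hA : ∀ i, ∑ k, A i k = 1) (hB : ∀ j, ∑ l, B j l = 1)
    {i i' : m} {j j' : n} (hij : OutcomesAgree (A ⊗ₖ B) i j) (hij' : OutcomesAgree (A ⊗ₖ B) i j')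
    (hi'j : OutcomesAgree (A ⊗ₖ B) i' j) : ¬ OutcomesDiffer (A ⊗ₖ B) i' j' := by
  intro hi'j'
  have hrow : A i' = B j' :=
    calc
      A i' = B j := hi'j.row_eq_row (hA i') (hB j)
      _ = A i := (hij.row_eq_row (hA i) (hB j)).symm
      _ = B j' := hij'.row_eq_row (hA i) (hB j')
  have hmul : ∀ k, A i' k * B j' k = 0 := hi'j'
  have hzero : ∀ k, A i' k = 0 := fun k => mul_self_eq_zero.1 (by simpa only [← hrow] using hmul k)
  exact one_ne_zero ((hA i').symm.trans (Fintype.sum_eq_zero _ hzero))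

end Outcomes

section ConvexCombination

variable {κ m n ι R : Type*} [Fintype κ] [Semiring R] [PartialOrder R] [IsOrderedRing R]
  [NoZeroDivisors R]

lemma exists_forall_apply_eq_zero_of_sum_smul_apply_eq_zero {x : κ → R} {M : κ → Matrix m n R}
    (hx : ∀ s, 0 ≤ x s) (hsum : ∑ s, x s ≠ 0) (hM : ∀ s p q, 0 ≤ M s p q) :
    ∃ s, ∀ p q, (∑ t, x t • M t) p q = 0 → M s p q = 0 := by
  obtain ⟨s, -, hs⟩ := Finset.exists_ne_zero_of_sum_ne_zero hsum
  refine ⟨s, fun p q hpq => ?_⟩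
  have hterms : ∑ t, x t * M t p q = 0 := by
    simpa only [Matrix.sum_apply, Matrix.smul_apply, smul_eq_mul] using hpq
  have hterm : x s * M s p q = 0 :=
    (Finset.sum_eq_zero_iff_of_nonneg fun t _ => mul_nonneg (hx t) (hM t p q)).1 hterms s
      (Finset.mem_univ s)
  exact (mul_eq_zero.1 hterm).resolve_left hs

lemma not_outcomesDiffer_sum_smul_kronecker [Fintype ι] [Nontrivial R] {x : κ → R}
    {A : κ → Matrix m ι R} {B : κ → Matrix n ι R} (hx : ∀ s, 0 ≤ x s) (hsum : ∑ s, x s ≠ 0)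
    (hA_nonneg : ∀ s i k, 0 ≤ A s i k) (hA_sum : ∀ s i, ∑ k, A s i k = 1)
    (hB_nonneg : ∀ s j l, 0 ≤ B s j l) (hB_sum : ∀ s j, ∑ l, B s j l = 1)
    {i i' : m} {j j' : n} (hij : OutcomesAgree (∑ s, x s • (A s ⊗ₖ B s)) i j)
    (hij' : OutcomesAgree (∑ s, x s • (A s ⊗ₖ B s)) i j')
    (hi'j : OutcomesAgree (∑ s, x s • (A s ⊗ₖ B s)) i' j) :
    ¬ OutcomesDiffer (∑ s, x s • (A s ⊗ₖ B s)) i' j' := by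
  intro hi'j'
  obtain ⟨s, hs⟩ := exists_forall_apply_eq_zero_of_sum_smul_apply_eq_zero hx hsum
    (M := fun s => A s ⊗ₖ B s) fun s p q => mul_nonneg (hA_nonneg s p.1 q.1) (hB_nonneg s p.2 q.2)
  have agree_of_sum {a : m} {b : n} (h : OutcomesAgree (∑ s, x s • (A s ⊗ₖ B s)) a b) :
      OutcomesAgree (A s ⊗ₖ B s) a b := fun k l hkl => hs _ _ (h k l hkl)
  exact not_outcomesDiffer_kronecker (hA_sum s) (hB_sum s) (agree_of_sum hij) (agree_of_sum hij')
    (agree_of_sum hi'j) fun k => hs _ _ (hi'j' k)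

end ConvexCombination

lemma kron_eq_kronecker {α β : Type*} (A : Matrix α α ℝ) (B : Matrix β β ℝ) :
    kron A B = A ⊗ₖ B :=
  rfl

lemma Pneg_eq_kron_combination :
    Pneg = (1 / 2 : ℝ) • kron E00 E00 + (1 / 2 : ℝ) • kron E10 E11
      + (1 / 2 : ℝ) • kron E11 E10 - (1 / 2 : ℝ) • kron E10 E10 := by
  ext ⟨i, j⟩ ⟨k, l⟩
  fin_cases i <;> fin_cases j <;> fin_cases k <;> fin_cases l <;>
    norm_num [Pneg, kron, E00, E10, E11]

lemma isTransition_Pneg : IsTransition Pneg := by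
  constructor
  · intro p q
    simp only [Pneg, Matrix.of_apply]
    split_ifs <;> norm_num
  · intro p
    by_cases hp : p = (1, 1) <;> norm_num [Pneg, hp, Fintype.sum_prod_type]

lemma outcomesAgree_Pneg {i j : Fin 2} (hij : (i, j) ≠ (1, 1)) : OutcomesAgree Pneg i j := by
  intro k l hkl
  simp only [Pneg, Matrix.of_apply, if_neg hij, if_neg hkl]

lemma outcomesDiffer_Pneg : OutcomesDiffer Pneg 1 1 := by
  intro k
  simp only [Pneg, Matrix.of_apply, if_true]

/-- `Pneg` is a separable transition matrix (a linear combination, with coefficients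
summing to 1, of Kronecker products of row-stochastic matrices, some coefficients
negative), but it admits NO representation as a convex combination of Kronecker products
of row-stochastic matrices. -/
theorem stmt16 :
    (Pneg = (1 / 2 : ℝ) • kron E00 E00 + (1 / 2 : ℝ) • kron E10 E11
        + (1 / 2 : ℝ) • kron E11 E10 - (1 / 2 : ℝ) • kron E10 E10)
    ∧ IsTransition Pneg
    ∧ ¬ ∃ (K : ℕ) (x : Fin K → ℝ)
          (A B : Fin K → Matrix (Fin 2) (Fin 2) ℝ),
          (∀ j, 0 ≤ x j) ∧ (∑ j, x j = 1) ∧ (∀ j, IsTransition (A j)) ∧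
          (∀ j, IsTransition (B j)) ∧ Pneg = ∑ j, x j • kron (A j) (B j) := by
  refine ⟨Pneg_eq_kron_combination, isTransition_Pneg, ?_⟩
  rintro ⟨K, x, A, B, hx, hsum, hA, hB, hP⟩
  simp only [kron_eq_kronecker] at hP
  have agree {i j : Fin 2} (hij : (i, j) ≠ (1, 1)) :
      OutcomesAgree (∑ s, x s • (A s ⊗ₖ B s)) i j := hP ▸ outcomesAgree_Pneg hij
  have differ : OutcomesDiffer (∑ s, x s • (A s ⊗ₖ B s)) 1 1 := hP ▸ outcomesDiffer_Pneg
  exact not_outcomesDiffer_sum_smul_kronecker hx (hsum ▸ one_ne_zero)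
    (fun s => (hA s).1) (fun s => (hA s).2) (fun s => (hB s).1) (fun s => (hB s).2)
    (agree (i := 0) (j := 0) (by decide)) (agree (by decide)) (agree (by decide)) differ
end

section
/- Let S_A and S_B be finite types. Let p_A : S_A → Fin 2 → S_A → ℝ and p_B : S_B → Fin 2 → S_B → ℝ be transition kernels (nonnegative, with ∑_{s'} p_A s a s' = 1 and ∑_{s'} p_B s a s' = 1 for all (s,a)). Let π : Fin 2 × Fin 2 → ℝ be the policy with π(0,1) = π(1,0) = 1/2 and π(0,0) = π(1,1) = 0. For i ∈ {A,B} and action a ∈ Fin 2, define the matrix P_i^a over S_i × Fin 2 by P_i^a (s,ã) (s',a') = p_i s ã s' · [a' = a] (indicator). Define the policy-induced transition matrix P^π over (S_A × Fin 2) × (S_B × Fin 2) by P^π ((s_A,a_A),(s_B,a_B)) ((s'_A,a'_A),(s'_B,a'_B)) = p_A s_A a_A s'_A · p_B s_B a_B s'_B · π(a'_A, a'_B). Then P^π = (1/2) P_A^0 ⊗ P_B^1 + (1/2) P_A^1 ⊗ P_B^0; in particular P^π is separable although the agents' actions are coupled. -/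
open Matrix

/-- The matrix `P_i^a` over state–action pairs: transition by the kernel, then
deterministically take action `a`. -/
def Pact {S : Type*} (p : S → Fin 2 → S → ℝ) (a : Fin 2) :
    Matrix (S × Fin 2) (S × Fin 2) ℝ :=
  Matrix.of fun q q' => p q.1 q.2 q'.1 * (if q'.2 = a then 1 else 0)

/-- The shared-randomness policy: activate exactly one of the two agents, each with
probability 1/2. -/
noncomputable def sharedPol : Fin 2 × Fin 2 → ℝ :=
  fun a => if a = (0, 1) ∨ a = (1, 0) then (1 / 2 : ℝ) else 0

/-- The policy-induced global transition matrix under the shared-randomness policy. -/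
noncomputable def inducedShared {SA SB : Type*}
    (pA : SA → Fin 2 → SA → ℝ) (pB : SB → Fin 2 → SB → ℝ) :
    Matrix ((SA × Fin 2) × (SB × Fin 2)) ((SA × Fin 2) × (SB × Fin 2)) ℝ :=
  Matrix.of fun p q =>
    pA p.1.1 p.1.2 q.1.1 * pB p.2.1 p.2.2 q.2.1 * sharedPol (q.1.2, q.2.2)

/-!
A joint policy `π` that ignores the current states contributes only the factor `π (a', b')` to each
entry of the induced matrix. Expanding `π` in the indicators of single action pairs splits that
factor, so the induced matrix is the `π`-weighted combination of the matrices `P_A^a ⊗ P_B^b`,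
however strongly `π` correlates the two actions.
-/

/-- Separability of a matrix over a product: it is an affine combination of Kronecker products of
transition matrices. The coefficients may be negative. -/
def IsKronSeparable {α β : Type*} [Fintype α] [Fintype β] (Q : Matrix (α × β) (α × β) ℝ) : Prop :=
  ∃ (K : ℕ) (x : Fin K → ℝ) (A : Fin K → Matrix α α ℝ) (B : Fin K → Matrix β β ℝ),
    (∑ j, x j = 1) ∧ (∀ j, IsTransition (A j)) ∧ (∀ j, IsTransition (B j)) ∧
      Q = ∑ j, x j • kron (A j) (B j)

theorem IsKronSeparable.sum_smul_kron {ι α β : Type*} [Fintype ι] [Fintype α] [Fintype β]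
    {x : ι → ℝ} {A : ι → Matrix α α ℝ} {B : ι → Matrix β β ℝ} (hx : ∑ i, x i = 1)
    (hA : ∀ i, IsTransition (A i)) (hB : ∀ i, IsTransition (B i)) :
    IsKronSeparable (∑ i, x i • kron (A i) (B i)) := by
  let e := (Fintype.equivFin ι).symm
  exact ⟨Fintype.card ι, x ∘ e, A ∘ e, B ∘ e, (e.sum_comp x).trans hx, fun j => hA (e j),
    fun j => hB (e j), (e.sum_comp fun i => x i • kron (A i) (B i)).symm⟩

/-- The state–action matrix `P^a` of a kernel `p` with an arbitrary action type `α`, in which `a` is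
the next action; `Pact` is the case `α = Fin 2`. -/
def constActionMatrix {S α : Type*} [DecidableEq α] (p : S → α → S → ℝ) (a : α) :
    Matrix (S × α) (S × α) ℝ :=
  Matrix.of fun q q' => p q.1 q.2 q'.1 * (if q'.2 = a then 1 else 0)

/-- The matrix `P^π` induced by a joint policy `π` on arbitrary action types that does not look at
the states; `inducedShared` is the case `π = sharedPol`. -/
def policyMatrix {SA SB α β : Type*} (pA : SA → α → SA → ℝ) (pB : SB → β → SB → ℝ)
    (π : α × β → ℝ) : Matrix ((SA × α) × (SB × β)) ((SA × α) × (SB × β)) ℝ :=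
  Matrix.of fun p q => pA p.1.1 p.1.2 q.1.1 * pB p.2.1 p.2.2 q.2.1 * π (q.1.2, q.2.2)

theorem isTransition_constActionMatrix {S α : Type*} [Fintype S] [Fintype α] [DecidableEq α]
    {p : S → α → S → ℝ} (hp0 : ∀ s a s', 0 ≤ p s a s') (hp1 : ∀ s a, ∑ s', p s a s' = 1) (a : α) :
    IsTransition (constActionMatrix p a) := by
  refine ⟨fun q q' => mul_nonneg (hp0 _ _ _) (by positivity), fun q => ?_⟩
  simp [constActionMatrix, Fintype.sum_prod_type, hp1]

theorem policyMatrix_eq_sum {SA SB α β : Type*} [Fintype α] [Fintype β] [DecidableEq α]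
    [DecidableEq β] (pA : SA → α → SA → ℝ) (pB : SB → β → SB → ℝ) (π : α × β → ℝ) :
    policyMatrix pA pB π =
      ∑ c, π c • kron (constActionMatrix pA c.1) (constActionMatrix pB c.2) := by
  ext ⟨⟨sA, a⟩, sB, b⟩ ⟨⟨sA', a'⟩, sB', b'⟩
  have indicator_expansion :
      π (a', b') =
        ∑ c : α × β, π c * ((if a' = c.1 then 1 else 0) * if b' = c.2 then 1 else 0) := by
    simp [Fintype.sum_prod_type]
  simp only [policyMatrix, kron, constActionMatrix, Matrix.sum_apply, Matrix.smul_apply,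
    Matrix.of_apply, smul_eq_mul]
  rw [indicator_expansion, Finset.mul_sum]
  exact Finset.sum_congr rfl fun c _ => by ring

theorem sum_sharedPol_smul {M : Type*} [AddCommMonoid M] [Module ℝ M] (f : Fin 2 × Fin 2 → M) :
    ∑ c, sharedPol c • f c = (1 / 2 : ℝ) • f (0, 1) + (1 / 2 : ℝ) • f (1, 0) := by
  simp [sharedPol, Fintype.sum_prod_type]

theorem sum_sharedPol_eq_one : ∑ c, sharedPol c = 1 := by
  calc ∑ c, sharedPol c = ∑ c, sharedPol c • (1 : ℝ) := by simp only [smul_eq_mul, mul_one]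
    _ = (1 / 2 : ℝ) • 1 + (1 / 2 : ℝ) • 1 := sum_sharedPol_smul fun _ => 1
    _ = 1 := by norm_num

theorem stmt17_general {SA SB α β : Type*} [Fintype SA] [Fintype SB] [Fintype α] [Fintype β]
    [DecidableEq α] [DecidableEq β]
    (pA : SA → α → SA → ℝ) (hpA0 : ∀ s a s', 0 ≤ pA s a s') (hpA1 : ∀ s a, ∑ s', pA s a s' = 1)
    (pB : SB → β → SB → ℝ) (hpB0 : ∀ s b s', 0 ≤ pB s b s') (hpB1 : ∀ s b, ∑ s', pB s b s' = 1)
    (π : α × β → ℝ) (hπ : ∑ c, π c = 1) :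
    policyMatrix pA pB π
        = ∑ c, π c • kron (constActionMatrix pA c.1) (constActionMatrix pB c.2)
      ∧ IsKronSeparable (policyMatrix pA pB π) := by
  have h := policyMatrix_eq_sum pA pB π
  exact ⟨h, h ▸ .sum_smul_kron hπ (fun c => isTransition_constActionMatrix hpA0 hpA1 c.1)
    fun c => isTransition_constActionMatrix hpB0 hpB1 c.2⟩

/-- Shared randomness: although the agents' actions are coupled, the policy-induced
transition matrix equals `½ P_A⁰ ⊗ P_B¹ + ½ P_A¹ ⊗ P_B⁰`; in particular it is
separable. -/
theorem stmt17 {SA SB : Type*} [Fintype SA] [Fintype SB]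
    (pA : SA → Fin 2 → SA → ℝ) (hpA0 : ∀ s a s', 0 ≤ pA s a s')
    (hpA1 : ∀ s a, ∑ s', pA s a s' = 1)
    (pB : SB → Fin 2 → SB → ℝ) (hpB0 : ∀ s a s', 0 ≤ pB s a s')
    (hpB1 : ∀ s a, ∑ s', pB s a s' = 1) :
    inducedShared pA pB
        = (1 / 2 : ℝ) • kron (Pact pA 0) (Pact pB 1)
          + (1 / 2 : ℝ) • kron (Pact pA 1) (Pact pB 0)
    ∧ ∃ (K : ℕ) (x : Fin K → ℝ)
        (A : Fin K → Matrix (SA × Fin 2) (SA × Fin 2) ℝ)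
        (B : Fin K → Matrix (SB × Fin 2) (SB × Fin 2) ℝ),
        (∑ j, x j = 1) ∧ (∀ j, IsTransition (A j)) ∧ (∀ j, IsTransition (B j)) ∧
        inducedShared pA pB = ∑ j, x j • kron (A j) (B j) := by
  obtain ⟨h, hsep⟩ := stmt17_general pA hpA0 hpA1 pB hpB0 hpB1 sharedPol sum_sharedPol_eq_one
  exact ⟨h.trans (sum_sharedPol_smul _), hsep⟩
end

section
/- Let α and β be finite types, P a transition matrix over α × β with strictly positive stationary probability vector μ, and γ ∈ [0,1). Let r : α × β → ℝ be a global reward, and let r_A : α → ℝ, r_B : β → ℝ satisfy ‖ r − (r_A ⊗ e + e ⊗ r_B) ‖_μ ≤ δ, ‖r_A‖_∞ ≤ R_A and ‖r_B‖_∞ ≤ R_B. Suppose there exist transition matrices M_A over α and M_B over β such that for every x : α → ℝ with ‖x‖_∞ ≤ 1, (1/2) ‖ P(x ⊗ e) − (M_A x) ⊗ e ‖_μ ≤ ε_A, and symmetrically for B with bound ε_B. Let P_A, P_B be the marginalized local transition matrices of P with respect to μ and set Q = (I − γP)^{-1} r, Q_A = (I − γP_A)^{-1} r_A, Q_B = (I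 − γP_B)^{-1} r_B. Then ‖ Q − (Q_A ⊗ e + e ⊗ Q_B) ‖_μ ≤ δ/(1 − γ) + 4γ (ε_A R_A + ε_B R_B) / (1 − γ)². -/
open Matrix

/-- The marginalized local transition matrix of agent `A`. -/
noncomputable def localA {α β : Type*} [Fintype α] [Fintype β]
    (P : Matrix (α × β) (α × β) ℝ) (μ : α × β → ℝ) : Matrix α α ℝ :=
  Matrix.of fun a a' =>
    ∑ b, (μ (a, b) / ∑ b', μ (a, b')) * ∑ b', P (a, b) (a', b')

/-- The marginalized local transition matrix of agent `B`. -/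
noncomputable def localB {α β : Type*} [Fintype α] [Fintype β]
    (P : Matrix (α × β) (α × β) ℝ) (μ : α × β → ℝ) : Matrix β β ℝ :=
  Matrix.of fun b b' =>
    ∑ a, (μ (a, b) / ∑ a', μ (a', b)) * ∑ a', P (a, b) (a', b')

/-!
The decomposition error `D = Q - (Q_A ⊗ e + e ⊗ Q_B)` solves the Bellman equation of `P` for the
reward `r - (r_A ⊗ e + e ⊗ r_B) + γ (E_A Q_A + E_B Q_B)`, where `E_A x = P (x ⊗ e) - (P_A x) ⊗ e`.
Stationarity makes `P` a contraction for `‖·‖_μ`, so `‖D‖_μ` is at most the norm of that reward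
divided by `1 - γ`. The function `(P_A x) ⊗ e` is the conditional expectation of `P (x ⊗ e)` given
the first coordinate; conditional expectation is an `L¹` contraction that fixes functions of the
first coordinate, so `‖E_A x‖_μ` is at most twice the distance from `P (x ⊗ e)` to any such
function, in particular to `(M_A x) ⊗ e`. Finally `‖Q_A‖_∞ ≤ R_A / (1 - γ)`.
-/

section Seminorm

theorem seminorm_le_div_of_eq_add_smul {E : Type*} [AddCommGroup E] [Module ℝ E]
    (p : Seminorm ℝ E) {T : E → E} {x y : E} {γ : ℝ} (hγ0 : 0 ≤ γ) (hγ1 : γ < 1)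
    (hT : p (T x) ≤ p x) (hx : x = y + γ • T x) : p x ≤ p y / (1 - γ) := by
  have hle : p x ≤ p y + γ * p x := calc
    p x = p (y + γ • T x) := congrArg p hx
    _ ≤ p y + p (γ • T x) := map_add_le_add p _ _
    _ = p y + γ * p (T x) := by rw [map_smul_eq_mul, Real.norm_of_nonneg hγ0]
    _ ≤ p y + γ * p x := by gcongr
  rw [le_div_iff₀ (sub_pos.2 hγ1)]
  linarith

theorem seminorm_le_mul_of_forall_norm_le_one {E : Type*} [NormedAddCommGroup E]
    [NormedSpace ℝ E] (q : Seminorm ℝ E) {C c : ℝ} (hq : ∀ z, ‖z‖ ≤ 1 → q z ≤ C) {x : E}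
    (hx : ‖x‖ ≤ c) : q x ≤ C * c := by
  rcases ((norm_nonneg x).trans hx).eq_or_lt with rfl | hc
  · simp [norm_le_zero_iff.1 hx]
  have hz : ‖c⁻¹ • x‖ ≤ 1 := by
    rw [norm_smul, norm_inv, Real.norm_of_nonneg hc.le]
    exact inv_mul_le_one_of_le₀ hx hc.le
  calc q x = q (c • c⁻¹ • x) := by rw [smul_inv_smul₀ hc.ne']
    _ = q (c⁻¹ • x) * c := by rw [map_smul_eq_mul, Real.norm_of_nonneg hc.le, mul_comm]
    _ ≤ C * c := by gcongr; exact hq _ hz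

end Seminorm

section WeightedL1

variable {ι : Type*} [Fintype ι]

/-- The weighted `L¹` seminorm `∑ i, μ i * |x i|` of a nonnegative weight `μ`, bundled as a
`Seminorm` so that it can share the fixed-point estimate with the sup norm. -/
def weightedL1 (μ : ι → ℝ) (hμ : 0 ≤ μ) : Seminorm ℝ (ι → ℝ) :=
  Seminorm.of (fun x => μ ⬝ᵥ |x|)
    (fun x y => by
      rw [← dotProduct_add]
      exact dotProduct_le_dotProduct_of_nonneg_left (abs_add_le x y) hμ)
    (fun c x => by
      have habs : |c • x| = ‖c‖ • |x| := funext fun i => abs_mul c (x i)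
      rw [habs, dotProduct_smul, smul_eq_mul])

theorem abs_mulVec_le {κ : Type*} {P : Matrix κ ι ℝ} (hP : ∀ i j, 0 ≤ P i j) (x : ι → ℝ) :
    |P *ᵥ x| ≤ P *ᵥ |x| := fun i =>
  (Finset.abs_sum_le_sum_abs _ _).trans_eq <| Finset.sum_congr rfl fun j _ => by
    rw [abs_mul, abs_of_nonneg (hP i j), Pi.abs_apply]

theorem weightedL1_mulVec_le {P : Matrix ι ι ℝ} (hP : ∀ i j, 0 ≤ P i j) {μ : ι → ℝ}
    (hμ : 0 ≤ μ) (hstat : μ ᵥ* P = μ) (x : ι → ℝ) :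
    weightedL1 μ hμ (P *ᵥ x) ≤ weightedL1 μ hμ x := calc
  μ ⬝ᵥ |P *ᵥ x| ≤ μ ⬝ᵥ P *ᵥ |x| :=
    dotProduct_le_dotProduct_of_nonneg_left (abs_mulVec_le hP x) hμ
  _ = μ ⬝ᵥ |x| := by rw [dotProduct_mulVec, hstat]

end WeightedL1

section DiscountedValue

variable {ι : Type*} [Fintype ι]

theorem IsTransition.mulVec_one {M : Matrix ι ι ℝ} (hM : IsTransition M) : M *ᵥ 1 = 1 :=
  funext fun i => by rw [Matrix.mulVec, dotProduct_one, hM.2, Pi.one_apply]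

theorem IsTransition.norm_mulVec_le {M : Matrix ι ι ℝ} (hM : IsTransition M) (x : ι → ℝ) :
    ‖M *ᵥ x‖ ≤ ‖x‖ := (pi_norm_le_iff_of_nonneg (norm_nonneg x)).2 fun i => calc
  |(M *ᵥ x) i| ≤ ∑ j, M i j * |x j| := abs_mulVec_le hM.1 x i
  _ ≤ ∑ j, M i j * ‖x‖ := by
    gcongr with j
    · exact hM.1 i j
    · exact norm_le_pi_norm x j
  _ = ‖x‖ := by rw [← Finset.sum_mul, hM.2, one_mul]

theorem IsTransition.norm_le_div_of_eq_add_smul {M : Matrix ι ι ℝ} (hM : IsTransition M)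
    {γ : ℝ} (hγ0 : 0 ≤ γ) (hγ1 : γ < 1) {x y : ι → ℝ} (hx : x = y + γ • M *ᵥ x) :
    ‖x‖ ≤ ‖y‖ / (1 - γ) :=
  seminorm_le_div_of_eq_add_smul (normSeminorm ℝ (ι → ℝ)) hγ0 hγ1 (hM.norm_mulVec_le x) hx

variable [DecidableEq ι]

theorem IsTransition.isUnit_one_sub_smul {M : Matrix ι ι ℝ} (hM : IsTransition M) {γ : ℝ}
    (hγ0 : 0 ≤ γ) (hγ1 : γ < 1) : IsUnit (1 - γ • M) := by
  rw [← mulVec_injective_iff_isUnit]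
  refine (injective_iff_map_eq_zero (1 - γ • M).mulVecLin).2 fun x hx => ?_
  rw [mulVecLin_apply, sub_mulVec, one_mulVec, smul_mulVec, sub_eq_zero] at hx
  have hnorm : ‖x‖ ≤ ‖(0 : ι → ℝ)‖ / (1 - γ) :=
    hM.norm_le_div_of_eq_add_smul hγ0 hγ1 (hx.trans (zero_add _).symm)
  rwa [norm_zero, zero_div, norm_le_zero_iff] at hnorm

/-- The value function `(I - γM)⁻¹ r` of the reward `r` under the transition matrix `M` with
discount factor `γ`. -/
noncomputable def discountedValue (γ : ℝ) (M : Matrix ι ι ℝ) (r : ι → ℝ) : ι → ℝ :=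
  (1 - γ • M)⁻¹ *ᵥ r

theorem IsTransition.discountedValue_eq {M : Matrix ι ι ℝ} (hM : IsTransition M) {γ : ℝ}
    (hγ0 : 0 ≤ γ) (hγ1 : γ < 1) (r : ι → ℝ) :
    discountedValue γ M r = r + γ • M *ᵥ discountedValue γ M r := by
  have hinv : (1 - γ • M) *ᵥ discountedValue γ M r = r := by
    rw [discountedValue, mulVec_mulVec,
      mul_nonsing_inv _ ((isUnit_iff_isUnit_det _).1 (hM.isUnit_one_sub_smul hγ0 hγ1)),
      one_mulVec]
  rwa [sub_mulVec, one_mulVec, smul_mulVec, sub_eq_iff_eq_add] at hinv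

theorem IsTransition.norm_discountedValue_le {M : Matrix ι ι ℝ} (hM : IsTransition M) {γ : ℝ}
    (hγ0 : 0 ≤ γ) (hγ1 : γ < 1) (r : ι → ℝ) :
    ‖discountedValue γ M r‖ ≤ ‖r‖ / (1 - γ) :=
  hM.norm_le_div_of_eq_add_smul hγ0 hγ1 (hM.discountedValue_eq hγ0 hγ1 r)

end DiscountedValue

section CondMean

variable {ι κ : Type*} [Fintype ι] [DecidableEq κ]

/-- The `μ`-weighted mean of `x` over the fibre `f = a`, that is the conditional expectation of
`x` given `f = a`; it is `0` by convention on a fibre of mass `0`. -/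
noncomputable def condMean (μ : ι → ℝ) (f : ι → κ) (x : ι → ℝ) (a : κ) : ℝ :=
  (∑ i with f i = a, μ i * x i) / ∑ i with f i = a, μ i

theorem condMean_sub (μ : ι → ℝ) (f : ι → κ) (x y : ι → ℝ) :
    condMean μ f (x - y) = condMean μ f x - condMean μ f y :=
  funext fun a => by
    simp only [condMean, Pi.sub_apply, mul_sub, Finset.sum_sub_distrib, sub_div]

theorem condMean_nonneg {μ : ι → ℝ} (hμ : 0 ≤ μ) (f : ι → κ) {x : ι → ℝ} (hx : 0 ≤ x) (a : κ) :
    0 ≤ condMean μ f x a :=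
  div_nonneg (Finset.sum_nonneg fun i _ => mul_nonneg (hμ i) (hx i))
    (Finset.sum_nonneg fun i _ => hμ i)

theorem sum_fiber_pos {μ : ι → ℝ} (hμ : StrongLT 0 μ) (f : ι → κ) (i : ι) :
    0 < ∑ j with f j = f i, μ j :=
  Finset.sum_pos (fun j _ => hμ j) ⟨i, by simp⟩

theorem condMean_comp {μ : ι → ℝ} (hμ : StrongLT 0 μ) (f : ι → κ) (y : κ → ℝ) :
    condMean μ f (y ∘ f) ∘ f = y ∘ f := funext fun i => by
  have hconst : ∑ j with f j = f i, μ j * y (f j) = (∑ j with f j = f i, μ j) * y (f i) := by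
    rw [Finset.sum_mul]
    exact Finset.sum_congr rfl fun j hj => by rw [(Finset.mem_filter.1 hj).2]
  simp only [Function.comp_apply, condMean, hconst]
  exact mul_div_cancel_left₀ _ (sum_fiber_pos hμ f i).ne'

theorem weightedL1_condMean_le {μ : ι → ℝ} (hμ : 0 ≤ μ) (f : ι → κ) (x : ι → ℝ) :
    weightedL1 μ hμ (condMean μ f x ∘ f) ≤ weightedL1 μ hμ x := by
  have hfiber (a : κ) :
      ∑ i with f i = a, μ i * |condMean μ f x (f i)| ≤ ∑ i with f i = a, μ i * |x i| := calc
    ∑ i with f i = a, μ i * |condMean μ f x (f i)|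
      = (∑ i with f i = a, μ i) * |condMean μ f x a| := by
        rw [Finset.sum_mul]
        exact Finset.sum_congr rfl fun i hi => by rw [(Finset.mem_filter.1 hi).2]
    _ = |∑ i with f i = a, μ i| * (|∑ i with f i = a, μ i * x i| / |∑ i with f i = a, μ i|) := by
        rw [condMean, abs_div, abs_of_nonneg (Finset.sum_nonneg fun i _ => hμ i)]
    _ ≤ |∑ i with f i = a, μ i * x i| := by
        rw [mul_div_left_comm]
        exact mul_le_of_le_one_right (abs_nonneg _) (div_self_le_one _)
    _ ≤ ∑ i with f i = a, μ i * |x i| :=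
        (Finset.abs_sum_le_sum_abs _ _).trans_eq <| Finset.sum_congr rfl fun i _ => by
          rw [abs_mul, abs_of_nonneg (hμ i)]
  calc ∑ i, μ i * |condMean μ f x (f i)|
      = ∑ a ∈ Finset.univ.image f, ∑ i with f i = a, μ i * |condMean μ f x (f i)| :=
        (Finset.sum_fiberwise_of_maps_to (fun _ => Finset.mem_image_of_mem f) _).symm
    _ ≤ ∑ a ∈ Finset.univ.image f, ∑ i with f i = a, μ i * |x i| :=
        Finset.sum_le_sum fun a _ => hfiber a
    _ = ∑ i, μ i * |x i| :=
        Finset.sum_fiberwise_of_maps_to (fun _ => Finset.mem_image_of_mem f) _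

theorem weightedL1_sub_condMean_le {μ : ι → ℝ} (hμ : StrongLT 0 μ) (f : ι → κ) (x : ι → ℝ)
    (y : κ → ℝ) :
    weightedL1 μ hμ.le (x - condMean μ f x ∘ f)
      ≤ 2 * weightedL1 μ hμ.le (x - y ∘ f) := by
  set p := weightedL1 μ hμ.le
  have hsplit : x - condMean μ f x ∘ f = (x - y ∘ f) - condMean μ f (x - y ∘ f) ∘ f := by
    rw [condMean_sub, Pi.sub_comp, condMean_comp hμ]
    abel
  calc p (x - condMean μ f x ∘ f)
      = p ((x - y ∘ f) - condMean μ f (x - y ∘ f) ∘ f) := by rw [hsplit]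
    _ ≤ p (x - y ∘ f) + p (condMean μ f (x - y ∘ f) ∘ f) := map_sub_le_add p _ _
    _ ≤ 2 * p (x - y ∘ f) := by
      linarith [weightedL1_condMean_le hμ.le f (x - y ∘ f)]

end CondMean

section ApproxLumpable

variable {ι κ : Type*} [Fintype ι] [Fintype κ]

/-- Approximate lumpability of `P` along `f`: up to `ε`, the matrix `P` maps functions of `f` to
functions of `f`. The factor `1 / 2` is the one of the total variation distance. -/
def IsApproxLumpable (P : Matrix ι ι ℝ) (μ : ι → ℝ) (hμ : 0 ≤ μ) (f : ι → κ) (ε : ℝ) : Prop :=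
  ∀ x : κ → ℝ, ‖x‖ ≤ 1 → ∃ y : κ → ℝ, 1 / 2 * weightedL1 μ hμ (P *ᵥ (x ∘ f) - y ∘ f) ≤ ε

theorem IsApproxLumpable.of_matrix {P : Matrix ι ι ℝ} {μ : ι → ℝ} {hμ : 0 ≤ μ} {f : ι → κ}
    {ε : ℝ} (M : Matrix κ κ ℝ)
    (hM : ∀ x : κ → ℝ, (∀ a, |x a| ≤ 1) →
      1 / 2 * weightedL1 μ hμ (P *ᵥ (x ∘ f) - (M *ᵥ x) ∘ f) ≤ ε) :
    IsApproxLumpable P μ hμ f ε :=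
  fun x hx => ⟨M *ᵥ x, hM x ((pi_norm_le_iff_of_nonneg zero_le_one).1 hx)⟩

end ApproxLumpable

section MarginalMatrix

variable {ι κ : Type*} [Fintype ι] [DecidableEq κ]

/-- The transition matrix of `f` when the chain `P` is started from `μ`: the `(a, b)` entry is
the probability of moving into the fibre `f = b`, averaged over the fibre `f = a`. The local
matrices of the two agents are the cases `f = Prod.fst` and `f = Prod.snd`. -/
noncomputable def marginalMatrix (P : Matrix ι ι ℝ) (μ : ι → ℝ) (f : ι → κ) : Matrix κ κ ℝ :=
  Matrix.of fun a b => condMean μ f (fun i => ∑ j with f j = b, P i j) a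

theorem localA_eq_marginalMatrix {α β : Type*} [Fintype α] [Fintype β] [DecidableEq α]
    (P : Matrix (α × β) (α × β) ℝ) (μ : α × β → ℝ) :
    localA P μ = marginalMatrix P μ Prod.fst := by
  ext a a'
  simp only [localA, marginalMatrix, condMean, of_apply, Finset.sum_filter,
    Fintype.sum_prod_type_right, Finset.sum_ite_eq', Finset.mem_univ, if_true, Finset.sum_div,
    div_mul_eq_mul_div]

theorem localB_eq_marginalMatrix {α β : Type*} [Fintype α] [Fintype β] [DecidableEq β]
    (P : Matrix (α × β) (α × β) ℝ) (μ : α × β → ℝ) :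
    localB P μ = marginalMatrix P μ Prod.snd := by
  ext b b'
  simp only [localB, marginalMatrix, condMean, of_apply, Finset.sum_filter,
    Fintype.sum_prod_type, Finset.sum_ite_eq', Finset.mem_univ, if_true, Finset.sum_div,
    div_mul_eq_mul_div]

variable [Fintype κ]

theorem marginalMatrix_mulVec (P : Matrix ι ι ℝ) (μ : ι → ℝ) (f : ι → κ) (x : κ → ℝ) :
    marginalMatrix P μ f *ᵥ x = condMean μ f (P *ᵥ (x ∘ f)) := by
  have hfiber (i : ι) : (P *ᵥ (x ∘ f)) i = ∑ b, (∑ j with f j = b, P i j) * x b := by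
    simp only [Finset.sum_mul]
    refine (Finset.sum_fiberwise Finset.univ f _).symm.trans ?_
    exact Finset.sum_congr rfl fun b _ => Finset.sum_congr rfl fun j hj => by
      rw [Function.comp_apply, (Finset.mem_filter.1 hj).2]
  funext a
  simp only [condMean, hfiber, Finset.mul_sum (s := Finset.univ)]
  rw [Finset.sum_comm, Finset.sum_div]
  refine Finset.sum_congr rfl fun b _ => ?_
  simp only [marginalMatrix, of_apply, condMean, ← mul_assoc, ← Finset.sum_mul]
  rw [div_mul_eq_mul_div]

theorem isTransition_marginalMatrix {P : Matrix ι ι ℝ} (hP : IsTransition P) {μ : ι → ℝ}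
    (hμ : StrongLT 0 μ) {f : ι → κ} (hf : f.Surjective) :
    IsTransition (marginalMatrix P μ f) := by
  refine ⟨fun a b => condMean_nonneg hμ.le f
    (fun i => Finset.sum_nonneg fun j _ => hP.1 i j) a, hf.forall.2 fun i => ?_⟩
  have hone : marginalMatrix P μ f *ᵥ 1 = condMean μ f ((1 : κ → ℝ) ∘ f) := by
    rw [marginalMatrix_mulVec, Pi.one_comp, hP.mulVec_one]
  calc ∑ b, marginalMatrix P μ f (f i) b = (marginalMatrix P μ f *ᵥ 1) (f i) := by
        rw [Matrix.mulVec, dotProduct_one]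
    _ = 1 := by rw [hone]; exact congrFun (condMean_comp hμ f 1) i

/-- The error `x ↦ P (x ∘ f) - (P_f x) ∘ f` of replacing `P` by its marginal matrix `P_f` when
acting on functions of `f`. -/
noncomputable def lumpingError (P : Matrix ι ι ℝ) (μ : ι → ℝ) (f : ι → κ) :
    (κ → ℝ) →ₗ[ℝ] ι → ℝ :=
  P.mulVecLin ∘ₗ LinearMap.funLeft ℝ ℝ f -
    LinearMap.funLeft ℝ ℝ f ∘ₗ (marginalMatrix P μ f).mulVecLin

theorem lumpingError_apply (P : Matrix ι ι ℝ) (μ : ι → ℝ) (f : ι → κ) (x : κ → ℝ) :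
    lumpingError P μ f x = P *ᵥ (x ∘ f) - (marginalMatrix P μ f *ᵥ x) ∘ f := rfl

theorem weightedL1_lumpingError_le_two_mul (P : Matrix ι ι ℝ) {μ : ι → ℝ} (hμ : StrongLT 0 μ)
    (f : ι → κ) (x y : κ → ℝ) :
    weightedL1 μ hμ.le (lumpingError P μ f x)
      ≤ 2 * weightedL1 μ hμ.le (P *ᵥ (x ∘ f) - y ∘ f) := by
  rw [lumpingError_apply, marginalMatrix_mulVec]
  exact weightedL1_sub_condMean_le hμ f _ y

theorem IsApproxLumpable.weightedL1_lumpingError_le {P : Matrix ι ι ℝ} {μ : ι → ℝ}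
    (hμ : StrongLT 0 μ) {f : ι → κ} {ε : ℝ}
    (h : IsApproxLumpable P μ hμ.le f ε) {x : κ → ℝ} {c : ℝ} (hx : ‖x‖ ≤ c) :
    weightedL1 μ hμ.le (lumpingError P μ f x) ≤ 4 * ε * c :=
  seminorm_le_mul_of_forall_norm_le_one
    ((weightedL1 μ hμ.le).comp (lumpingError P μ f))
    (fun z hz => by
      obtain ⟨y, hy⟩ := h z hz
      have herror := weightedL1_lumpingError_le_two_mul P hμ f z y
      rw [Seminorm.comp_apply]
      linarith) hx

end MarginalMatrix

section Decomposition

variable {ι κ : Type*} [Fintype ι] [Fintype κ] [DecidableEq κ] {P : Matrix ι ι ℝ} {μ : ι → ℝ}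
  {γ : ℝ}

/-- The value function of the local reward `r` under the marginal matrix of `f`: the local
`Q`-function of the agent that observes only `f`. -/
noncomputable def marginalValue (γ : ℝ) (P : Matrix ι ι ℝ) (μ : ι → ℝ) (f : ι → κ) (r : κ → ℝ) :
    κ → ℝ :=
  discountedValue γ (marginalMatrix P μ f) r

theorem marginalValue_comp_eq (hP : IsTransition P) (hμ : StrongLT 0 μ) {f : ι → κ}
    (hf : f.Surjective) (hγ0 : 0 ≤ γ) (hγ1 : γ < 1) (r : κ → ℝ) :
    marginalValue γ P μ f r ∘ f =
      r ∘ f + γ • (P *ᵥ (marginalValue γ P μ f r ∘ f) -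
        lumpingError P μ f (marginalValue γ P μ f r)) := by
  rw [lumpingError_apply, sub_sub_cancel]
  exact congrArg (· ∘ f) ((isTransition_marginalMatrix hP hμ hf).discountedValue_eq hγ0 hγ1 r)

theorem IsApproxLumpable.weightedL1_lumpingError_marginalValue_le (hP : IsTransition P)
    (hμ : StrongLT 0 μ) {f : ι → κ} (hf : f.Surjective) (hγ0 : 0 ≤ γ) (hγ1 : γ < 1) {ε R : ℝ}
    (h : IsApproxLumpable P μ hμ.le f ε) {r : κ → ℝ} (hr : ‖r‖ ≤ R) :
    weightedL1 μ hμ.le (lumpingError P μ f (marginalValue γ P μ f r))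
      ≤ 4 * ε * (R / (1 - γ)) :=
  h.weightedL1_lumpingError_le hμ <|
    ((isTransition_marginalMatrix hP hμ hf).norm_discountedValue_le hγ0 hγ1 r).trans <|
      div_le_div_of_nonneg_right hr (sub_nonneg.2 hγ1.le)

variable {α β : Type*} [Fintype α] [Fintype β] [DecidableEq ι] [DecidableEq α] [DecidableEq β]
  {f : ι → α} {g : ι → β}

/-- The error `Q - (Q_A ∘ f + Q_B ∘ g)` of decomposing the global value function into the local
value functions of two agents that observe `f` and `g`. -/
noncomputable def decompositionError (γ : ℝ) (P : Matrix ι ι ℝ) (μ : ι → ℝ) (f : ι → α)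
    (g : ι → β) (r : ι → ℝ) (rA : α → ℝ) (rB : β → ℝ) : ι → ℝ :=
  discountedValue γ P r - (marginalValue γ P μ f rA ∘ f + marginalValue γ P μ g rB ∘ g)

theorem decompositionError_eq (hP : IsTransition P) (hμ : StrongLT 0 μ) (hf : f.Surjective)
    (hg : g.Surjective) (hγ0 : 0 ≤ γ) (hγ1 : γ < 1) (r : ι → ℝ) (rA : α → ℝ) (rB : β → ℝ) :
    decompositionError γ P μ f g r rA rB =
      (r - (rA ∘ f + rB ∘ g) + γ • (lumpingError P μ f (marginalValue γ P μ f rA) +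
        lumpingError P μ g (marginalValue γ P μ g rB))) +
      γ • P *ᵥ decompositionError γ P μ f g r rA rB := by
  have hQ := hP.discountedValue_eq hγ0 hγ1 r
  have hQA := marginalValue_comp_eq hP hμ hf hγ0 hγ1 rA
  have hQB := marginalValue_comp_eq hP hμ hg hγ0 hγ1 rB
  rw [decompositionError, mulVec_sub, mulVec_add]
  nth_rw 1 [hQ, hQA, hQB]
  module

theorem stmt18_general (hP : IsTransition P) (hμ : StrongLT 0 μ) (hstat : μ ᵥ* P = μ)
    (hf : f.Surjective) (hg : g.Surjective) (hγ0 : 0 ≤ γ) (hγ1 : γ < 1)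
    {r : ι → ℝ} {rA : α → ℝ} {rB : β → ℝ} {RA RB εA εB δ : ℝ}
    (hδ : weightedL1 μ hμ.le (r - (rA ∘ f + rB ∘ g)) ≤ δ) (hrA : ‖rA‖ ≤ RA) (hrB : ‖rB‖ ≤ RB)
    (hA : IsApproxLumpable P μ hμ.le f εA) (hB : IsApproxLumpable P μ hμ.le g εB) :
    weightedL1 μ hμ.le (decompositionError γ P μ f g r rA rB)
      ≤ δ / (1 - γ) + 4 * γ * (εA * RA + εB * RB) / (1 - γ) ^ 2 := by
  have hγ : 0 < 1 - γ := sub_pos.2 hγ1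
  set p := weightedL1 μ hμ.le
  set D := decompositionError γ P μ f g r rA rB
  set d := r - (rA ∘ f + rB ∘ g)
  set eA := lumpingError P μ f (marginalValue γ P μ f rA)
  set eB := lumpingError P μ g (marginalValue γ P μ g rB)
  have heA : p eA ≤ 4 * εA * (RA / (1 - γ)) :=
    hA.weightedL1_lumpingError_marginalValue_le hP hμ hf hγ0 hγ1 hrA
  have heB : p eB ≤ 4 * εB * (RB / (1 - γ)) :=
    hB.weightedL1_lumpingError_marginalValue_le hP hμ hg hγ0 hγ1 hrB
  have hsource : p (d + γ • (eA + eB)) ≤ p d + γ * (p eA + p eB) := calc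
    p (d + γ • (eA + eB)) ≤ p d + p (γ • (eA + eB)) := map_add_le_add p _ _
    _ = p d + γ * p (eA + eB) := by rw [map_smul_eq_mul, Real.norm_of_nonneg hγ0]
    _ ≤ p d + γ * (p eA + p eB) := by
      gcongr
      exact map_add_le_add p _ _
  calc p D ≤ p (d + γ • (eA + eB)) / (1 - γ) :=
        seminorm_le_div_of_eq_add_smul p hγ0 hγ1 (weightedL1_mulVec_le hP.1 _ hstat D)
          (decompositionError_eq hP hμ hf hg hγ0 hγ1 r rA rB)
    _ ≤ (δ + γ * (4 * εA * (RA / (1 - γ)) + 4 * εB * (RB / (1 - γ)))) / (1 - γ) := by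
        gcongr
        exact hsource.trans (by gcongr)
    _ = δ / (1 - γ) + 4 * γ * (εA * RA + εB * RB) / (1 - γ) ^ 2 := by field_simp

end Decomposition

/-- Fully cooperative setting: the `μ`-norm decomposition error of a global (possibly
non-decomposable) reward is bounded by the reward-entanglement `δ/(1−γ)` term plus the
transition-entanglement `4γ(ε_A R_A + ε_B R_B)/(1−γ)²` term. -/
theorem stmt18 {α β : Type*} [Fintype α] [Fintype β] [DecidableEq α] [DecidableEq β]
    (P : Matrix (α × β) (α × β) ℝ) (hP : IsTransition P)
    (μ : α × β → ℝ) (hμpos : ∀ p, 0 < μ p) (hμsum : ∑ p, μ p = 1)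
    (hstat : ∀ q, ∑ p, μ p * P p q = μ q)
    (γ RA RB εA εB δ : ℝ) (hγ0 : 0 ≤ γ) (hγ1 : γ < 1)
    (r : α × β → ℝ) (rA : α → ℝ) (rB : β → ℝ)
    (hδ : ∑ p, μ p * |r p - (rA p.1 + rB p.2)| ≤ δ)
    (hrA : ∀ a, |rA a| ≤ RA) (hrB : ∀ b, |rB b| ≤ RB)
    (MA : Matrix α α ℝ) (hMA : IsTransition MA)
    (MB : Matrix β β ℝ) (hMB : IsTransition MB)
    (hATVA : ∀ x : α → ℝ, (∀ a, |x a| ≤ 1) →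
      (1 / 2 : ℝ) * ∑ p, μ p * |P.mulVec (fun q => x q.1) p - (MA.mulVec x) p.1| ≤ εA)
    (hATVB : ∀ y : β → ℝ, (∀ b, |y b| ≤ 1) →
      (1 / 2 : ℝ) * ∑ p, μ p * |P.mulVec (fun q => y q.2) p - (MB.mulVec y) p.2| ≤ εB) :
    ∑ p, μ p * |((1 - γ • P)⁻¹).mulVec r p
            - ((((1 - γ • localA P μ)⁻¹).mulVec rA) p.1
              + (((1 - γ • localB P μ)⁻¹).mulVec rB) p.2)|
        ≤ δ / (1 - γ) + 4 * γ * (εA * RA + εB * RB) / (1 - γ) ^ 2 := by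
  obtain ⟨_, _⟩ : Nonempty α ∧ Nonempty β := nonempty_prod.1 <|
    Finset.univ_nonempty_iff.1 <| Finset.nonempty_of_sum_ne_zero (hμsum.trans_ne one_ne_zero)
  rw [localA_eq_marginalMatrix, localB_eq_marginalMatrix]
  exact stmt18_general hP hμpos (funext hstat) Prod.fst_surjective Prod.snd_surjective hγ0 hγ1 hδ
    ((pi_norm_le_iff_of_nonempty _).2 hrA) ((pi_norm_le_iff_of_nonempty _).2 hrB)
    (.of_matrix MA hATVA) (.of_matrix MB hATVB)
end
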